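/- The two-sided edge change of variables u(û) = −1 + (1/π)·w(π(û + 1)) is a strictly increasing bijection from [−1, 1] onto [−1, 1], and its derivatives of all orders k with 1 ≤ k ≤ p − 1 vanish at both endpoints û = −1 and û = 1. -/

import Mathlib

/-!
In the variable `x = û`, the cubic `v` becomes `a(x) = (1/2 - 1/p) x³ + x/p + 1/2`
(`edgeCubic`), which increases strictly from `a(-1) = 0` to `a(1) = 1` and satisfies
`a(-x) = 1 - a(x)`. With `b = 1 - a` and `D = a^p + b^p`, the change of variables is
`u = -1 + 2 a^p / D = 1 - 2 b^p / D`.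

* On `[-1, 1]` both `a` and `b` are nonnegative, `a` increases and `b` decreases, so `a^p / D`
  increases strictly; with `u(±1) = ±1` and continuity this gives the bijection.
* `D > 0` on the whole line, so `u` is analytic. Since `a(-1) = 0` and `b(1) = 0`, the function `u`
  is, for each endpoint, a constant plus an analytic multiple of the `p`-th power of an analytic
  function vanishing there, so its derivatives of orders `1, …, p - 1` vanish
  (`iteratedDeriv_pow_mul_eq_zero`).
-/

open Real

/-- The function `v` from equation (colt_kress_2), depending on an integer parameter `p`. -/
noncomputable def vCK (p : ℕ) (τ : ℝ) : ℝ :=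
  (1 / (p : ℝ) - 1 / 2) * ((π - τ) / π) ^ 3 + (1 / (p : ℝ)) * ((τ - π) / π) + 1 / 2

/-- The Colton–Kress change of variables `w` from equation (colt_kress_1). -/
noncomputable def wCK (p : ℕ) (τ : ℝ) : ℝ :=
  2 * π * (vCK p τ) ^ p / ((vCK p τ) ^ p + (vCK p (2 * π - τ)) ^ p)

/-- The two-sided edge change of variables `u(û) = −1 + (1/π)·w(π(û + 1))`. -/
noncomputable def edgeCV (p : ℕ) (uu : ℝ) : ℝ :=
  -1 + (1 / π) * wCK p (π * (uu + 1))

/-- The cubic `v(π(x + 1))` written in the variable `x`. -/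
noncomputable def edgeCubic (p : ℕ) (x : ℝ) : ℝ :=
  (1 / 2 - 1 / (p : ℝ)) * x ^ 3 + (1 / (p : ℝ)) * x + 1 / 2

lemma edgeCubic_strictMono (p : ℕ) (hp : 2 ≤ p) : StrictMono (edgeCubic p) := by
  intro x y hxy
  have hp' : (2 : ℝ) ≤ p := by exact_mod_cast hp
  have h1 : 0 < 1 / (p : ℝ) := by positivity
  have h2 : 1 / (p : ℝ) ≤ 1 / 2 := one_div_le_one_div_of_le (by norm_num) hp'
  have h3 : x ^ 3 ≤ y ^ 3 := (Odd.strictMono_pow (by decide : Odd 3)).monotone hxy.le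
  have h4 := mul_le_mul_of_nonneg_left h3 (sub_nonneg.2 h2)
  have h5 := mul_lt_mul_of_pos_left hxy h1
  unfold edgeCubic
  linarith

lemma edgeCubic_neg_one (p : ℕ) : edgeCubic p (-1) = 0 := by
  unfold edgeCubic; ring

lemma edgeCubic_one (p : ℕ) : edgeCubic p 1 = 1 := by
  unfold edgeCubic; ring

lemma edgeCubic_contDiff (p : ℕ) : ContDiff ℝ ⊤ (edgeCubic p) := by
  unfold edgeCubic; fun_prop

/-- The denominator is positive on the whole line: for odd `p` this is `(t - 1)^p < t^p`. -/
lemma pow_add_one_sub_pow_pos (p : ℕ) (hp : 2 ≤ p) (t : ℝ) : 0 < t ^ p + (1 - t) ^ p := by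
  rcases Nat.even_or_odd p with he | ho
  · by_cases h : t = 0
    · subst h
      simp [show p ≠ 0 by omega]
    · exact add_pos_of_pos_of_nonneg (he.pow_pos h) (he.pow_nonneg _)
  · have h1 : (t - 1) ^ p < t ^ p := ho.strictMono_pow (by linarith)
    have h2 : (1 - t) ^ p = -(t - 1) ^ p := by rw [← ho.neg_pow]; ring
    linarith

lemma edgeCV_eq (p : ℕ) (x : ℝ) :
    edgeCV p x = -1 + 2 * (edgeCubic p x ^ p / (edgeCubic p x ^ p + (1 - edgeCubic p x) ^ p)) := by
  have hpi : π ≠ 0 := Real.pi_ne_zero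
  have e1 : vCK p (π * (x + 1)) = edgeCubic p x := by
    unfold vCK edgeCubic
    rw [show (π - π * (x + 1)) / π = -x by field_simp; ring,
      show (π * (x + 1) - π) / π = x by field_simp; ring]
    ring
  have e2 : vCK p (2 * π - π * (x + 1)) = 1 - edgeCubic p x := by
    unfold vCK edgeCubic
    rw [show (π - (2 * π - π * (x + 1))) / π = x by field_simp; ring,
      show (2 * π - π * (x + 1) - π) / π = -x by field_simp; ring]
    ring
  unfold edgeCV wCK
  rw [e1, e2]
  field_simp

/-- An analytic multiple of the `n`-th power of an analytic function vanishing at `x₀` has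
vanishing derivatives of order less than `n` at `x₀`. -/
lemma iteratedDeriv_pow_mul_eq_zero {f : ℝ → ℝ} (hf : ContDiff ℝ ⊤ f) {x₀ : ℝ} (h0 : f x₀ = 0)
    (k : ℕ) : ∀ (n : ℕ) (g : ℝ → ℝ), ContDiff ℝ ⊤ g → k < n →
      iteratedDeriv k (fun x => f x ^ n * g x) x₀ = 0 := by
  induction k with
  | zero =>
    intro n g _ hn
    simp [h0, show n ≠ 0 by omega]
  | succ k ih =>
    intro n g hg hn
    obtain ⟨m, rfl⟩ : ∃ m, n = m + 1 := ⟨n - 1, by omega⟩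
    have hf' : ContDiff ℝ ⊤ (deriv f) := hf.deriv'
    have hg' : ContDiff ℝ ⊤ (deriv g) := hg.deriv'
    have hd : deriv (fun x => f x ^ (m + 1) * g x) =
        fun x => f x ^ m * ((m + 1) * deriv f x * g x + f x * deriv g x) := by
      funext x
      have h1 := ((hf.differentiable (by simp)) x).hasDerivAt
      have h2 := ((hg.differentiable (by simp)) x).hasDerivAt
      rw [((h1.fun_pow (m + 1)).fun_mul h2).deriv]
      push_cast
      ring
    rw [iteratedDeriv_succ', hd]
    exact ih m _ (by fun_prop) (by omega)

lemma iteratedDeriv_const_add_pow_mul_eq_zero {f g : ℝ → ℝ} (hf : ContDiff ℝ ⊤ f)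
    (hg : ContDiff ℝ ⊤ g) {x₀ : ℝ} (h0 : f x₀ = 0) (c : ℝ) {k n : ℕ} (hk : 1 ≤ k) (hkn : k < n) :
    iteratedDeriv k (fun x => c + f x ^ n * g x) x₀ = 0 := by
  rw [← iteratedDeriv_pow_mul_eq_zero hf h0 k n g hg hkn]
  obtain ⟨j, rfl⟩ : ∃ j, k = j + 1 := ⟨k - 1, by omega⟩
  rw [iteratedDeriv_succ', iteratedDeriv_succ']
  congr 1
  funext x
  exact deriv_const_add _

theorem edgeCV_strictMono_bijective_and_flat_at_endpoints (p : ℕ) (hp : 2 ≤ p) :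
    StrictMonoOn (edgeCV p) (Set.Icc (-1) 1) ∧
    Set.BijOn (edgeCV p) (Set.Icc (-1) 1) (Set.Icc (-1) 1) ∧
    (∀ k : ℕ, 1 ≤ k → k ≤ p - 1 →
      iteratedDeriv k (edgeCV p) (-1) = 0 ∧ iteratedDeriv k (edgeCV p) 1 = 0) := by
  have hp0 : p ≠ 0 := by omega
  have hD := fun x => pow_add_one_sub_pow_pos p hp (edgeCubic p x)
  have ha := edgeCubic_contDiff p
  have hinv : ContDiff ℝ ⊤
      (fun x => (edgeCubic p x ^ p + (1 - edgeCubic p x) ^ p)⁻¹) :=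
    ContDiff.inv (by fun_prop) (fun x => (hD x).ne')
  have hleft : edgeCV p = fun x => -1 + edgeCubic p x ^ p *
      (2 * (edgeCubic p x ^ p + (1 - edgeCubic p x) ^ p)⁻¹) := by
    funext x
    rw [edgeCV_eq]
    ring
  have hright : edgeCV p = fun x => 1 + (1 - edgeCubic p x) ^ p *
      (-2 * (edgeCubic p x ^ p + (1 - edgeCubic p x) ^ p)⁻¹) := by
    funext x
    have := (hD x).ne'
    rw [edgeCV_eq]
    field_simp
    ring
  have hmono : StrictMonoOn (edgeCV p) (Set.Icc (-1) 1) := by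
    intro x hx y hy hxy
    have hm := edgeCubic_strictMono p hp
    have h0 : 0 ≤ edgeCubic p x := by
      rw [← edgeCubic_neg_one p]; exact hm.monotone hx.1
    have h1 : edgeCubic p y ≤ 1 := by
      rw [← edgeCubic_one p]; exact hm.monotone hy.2
    have hlt := hm hxy
    have hA := pow_lt_pow_left₀ hlt h0 hp0
    have hB : (1 - edgeCubic p y) ^ p < (1 - edgeCubic p x) ^ p :=
      pow_lt_pow_left₀ (by linarith) (by linarith) hp0
    have hAB := mul_lt_mul'' hA hB (pow_nonneg h0 p) (pow_nonneg (by linarith) p)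
    rw [edgeCV_eq, edgeCV_eq]
    have : edgeCubic p x ^ p / (edgeCubic p x ^ p + (1 - edgeCubic p x) ^ p) <
        edgeCubic p y ^ p / (edgeCubic p y ^ p + (1 - edgeCubic p y) ^ p) := by
      rw [div_lt_div_iff₀ (hD x) (hD y)]
      linarith
    linarith
  have hm1 : edgeCV p (-1) = -1 := by
    rw [edgeCV_eq, edgeCubic_neg_one]; simp [hp0]
  have h1 : edgeCV p 1 = 1 := by
    rw [edgeCV_eq, edgeCubic_one]; simp [hp0]; norm_num
  have hcont : Continuous (edgeCV p) := by
    rw [hleft]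
    have := hinv.continuous
    have := ha.continuous
    fun_prop
  refine ⟨hmono, ⟨?_, hmono.injOn, ?_⟩, ?_⟩
  · intro x hx
    have hl := hmono.monotoneOn (Set.left_mem_Icc.2 (by norm_num)) hx hx.1
    have hr := hmono.monotoneOn hx (Set.right_mem_Icc.2 (by norm_num)) hx.2
    rw [hm1] at hl
    rw [h1] at hr
    exact ⟨hl, hr⟩
  · have := intermediate_value_Icc (show (-1 : ℝ) ≤ 1 by norm_num) hcont.continuousOn
    rwa [hm1, h1] at this
  · intro k hk hkp
    constructor
    · rw [hleft]
      exact iteratedDeriv_const_add_pow_mul_eq_zero ha (contDiff_const.mul hinv)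
        (edgeCubic_neg_one p) _ hk (by omega)
    · rw [hright]
      exact iteratedDeriv_const_add_pow_mul_eq_zero (f := fun x => 1 - edgeCubic p x)
        (contDiff_const.sub ha) (contDiff_const.mul hinv) (by simp [edgeCubic_one]) _ hk (by omega)
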